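/- Let γ>0. Then as real u→+∞ one has Li_γ(−u) = −(log u)^γ/Γ(γ+1)·(1 + O((log u)^{−2})), i.e., there exist constants C>0 and u₀>1 such that |Li_γ(−u) + (log u)^γ/Γ(γ+1)| ≤ C·(log u)^{γ−2} for all u ≥ u₀. -/

import Mathlib

open Real

/-- `Li_ν(−x)` for `ν > 0`, `x > 0`, via the Fermi–Dirac integral
`Li_ν(−x) = −(1/Γ(ν)) ∫₀^∞ t^{ν−1}/(e^t/x + 1) dt`. -/
noncomputable def negLi (ν x : ℝ) : ℝ :=
  -(1 / Real.Gamma ν) * ∫ t in Set.Ioi (0:ℝ), t ^ (ν - 1) / (Real.exp t / x + 1)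

/-!
Write `L = log u`. After the substitution `t = L x`, the Fermi factor `1 / (e^t / u + 1)` becomes
`sigmoid (L (1 - x))`, which for large `L` is close to the step function `1_{x < 1}`; the step
alone contributes `∫₀¹ x^{γ-1} dx = 1 / γ`, the main term. The deviation from the step is an odd
function of `L (x - 1)` bounded by `exp (-L |x - 1|)`. Oddness annihilates the constant term of
`x^{γ-1}` at `x = 1`, so the error is at most a constant times
`∫ |x - 1| exp (-L |x - 1|) dx = O(L⁻²)`, up to an exponentially small contribution from `x`
away from `1`.
-/

open Filter Asymptotics MeasureTheory Set Topology

variable {E : Type*} [NormedAddCommGroup E] [NormedSpace ℝ E]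

lemma integral_abs_rpow_mul_exp_neg_mul_abs {a L : ℝ} (ha : 0 < a) (hL : 0 < L) :
    ∫ y : ℝ, |y| ^ (a - 1) * exp (-(L * |y|)) = 2 * Gamma a * L ^ (-a) := by
  rw [integral_comp_abs (f := fun y ↦ y ^ (a - 1) * exp (-(L * y))),
    integral_rpow_mul_exp_neg_mul_Ioi ha hL, one_div, inv_rpow hL.le, rpow_neg hL.le]
  ring

lemma integrable_abs_rpow_mul_exp_neg_mul_abs {a L : ℝ} (ha : 0 < a) (hL : 0 < L) :
    Integrable fun y : ℝ ↦ |y| ^ (a - 1) * exp (-(L * |y|)) := by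
  refine Integrable.of_integral_ne_zero ?_
  rw [integral_abs_rpow_mul_exp_neg_mul_abs ha hL]
  have := Gamma_pos_of_pos ha
  positivity

lemma exp_neg_mul_abs_le_of_le_abs {δ L M y : ℝ} (hL : 0 ≤ L) (hLM : 2 * M ≤ L) (hy : δ ≤ |y|) :
    exp (-(L * |y|)) ≤ exp (-(δ / 2) * L) * exp (-(M * |y|)) := by
  rw [← exp_add, exp_le_exp]
  nlinarith [abs_nonneg y]

lemma exp_neg_mul_abs_mul_norm_le {h : ℝ → E} {C a δ L M y : ℝ} (hC : 0 ≤ C) (hL : 0 ≤ L)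
    (hLM : 2 * M ≤ L) (h_near : |y| < δ → ‖h y‖ ≤ C * |y| ^ (a - 1)) :
    exp (-(L * |y|)) * ‖h y‖ ≤ C * (|y| ^ (a - 1) * exp (-(L * |y|))) +
      exp (-(δ / 2) * L) * ‖exp (-(M * |y|)) • h y‖ := by
  rw [norm_smul, norm_of_nonneg (exp_pos _).le]
  rcases lt_or_ge |y| δ with hy | hy
  · calc exp (-(L * |y|)) * ‖h y‖ ≤ exp (-(L * |y|)) * (C * |y| ^ (a - 1)) := by
          gcongr; exact h_near hy
      _ = C * (|y| ^ (a - 1) * exp (-(L * |y|))) := by ring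
      _ ≤ _ := le_add_of_nonneg_right (by positivity)
  · calc exp (-(L * |y|)) * ‖h y‖ ≤ exp (-(δ / 2) * L) * exp (-(M * |y|)) * ‖h y‖ := by
          gcongr; exact exp_neg_mul_abs_le_of_le_abs hL hLM hy
      _ = exp (-(δ / 2) * L) * (exp (-(M * |y|)) * ‖h y‖) := mul_assoc ..
      _ ≤ _ := le_add_of_nonneg_left (by positivity)

/-- A two-sided Watson lemma: only a neighbourhood `|y| < δ` of the origin matters, the rest of
the integral being `O(exp (-δ L / 2))`. -/
lemma isBigO_integral_exp_neg_mul_abs_mul_norm {h : ℝ → E} {a M : ℝ} (ha : 0 < a)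
    (h_int : Integrable fun y ↦ exp (-(M * |y|)) • h y)
    (h_zero : h =O[𝓝 0] fun y ↦ |y| ^ (a - 1)) :
    (fun L ↦ ∫ y, exp (-(L * |y|)) * ‖h y‖) =O[atTop] fun L : ℝ ↦ L ^ (-a) := by
  obtain ⟨C, hC, h_near⟩ := h_zero.exists_pos
  obtain ⟨δ, hδ, h_ball⟩ := Metric.eventually_nhds_iff.1 h_near.bound
  have h_le (y : ℝ) (hy : |y| < δ) : ‖h y‖ ≤ C * |y| ^ (a - 1) := by
    rw [← norm_of_nonneg (rpow_nonneg (abs_nonneg y) (a - 1))]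
    exact h_ball (by simpa using hy)
  set I := ∫ y, ‖exp (-(M * |y|)) • h y‖
  have h_bound : (fun L ↦ ∫ y, exp (-(L * |y|)) * ‖h y‖) =O[atTop]
      fun L ↦ C * (2 * Gamma a * L ^ (-a)) + exp (-(δ / 2) * L) * I := by
    refine .of_bound' ?_
    filter_upwards [eventually_gt_atTop 0, eventually_ge_atTop (2 * M)] with L hL hLM
    have h_int_near := (integrable_abs_rpow_mul_exp_neg_mul_abs ha hL).const_mul C
    have h_int_far := h_int.norm.const_mul (exp (-(δ / 2) * L))
    rw [← integral_abs_rpow_mul_exp_neg_mul_abs ha hL, ← integral_const_mul, ← integral_const_mul,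
      ← integral_add h_int_near h_int_far, norm_of_nonneg (integral_nonneg fun y ↦ by positivity)]
    exact (integral_mono_of_nonneg (.of_forall fun y ↦ by positivity) (h_int_near.add h_int_far)
      (.of_forall fun y ↦ exp_neg_mul_abs_mul_norm_le hC.le hL.le hLM (h_le y))).trans
      (le_abs_self _)
  refine h_bound.trans (.add ?_ ?_)
  · exact ((isBigO_refl _ _).const_mul_left _).const_mul_left _
  · simpa only [mul_comm _ I] using
      (isLittleO_exp_neg_mul_rpow_atTop (half_pos hδ) (-a)).isBigO.const_mul_left I

lemma integrable_smul_of_abs_le_exp_neg_mul_abs {f : ℝ → E} {φ : ℝ → ℝ} {L M : ℝ}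
    (hf : Integrable fun y ↦ exp (-(M * |y|)) • f y) (hφ : AEStronglyMeasurable φ)
    (hφ_le : ∀ y, |φ y| ≤ exp (-(L * |y|))) (hML : M ≤ L) :
    Integrable fun y ↦ φ y • f y := by
  have h_smul : Integrable fun y ↦ (φ y * exp (M * |y|)) • exp (-(M * |y|)) • f y := by
    refine hf.bdd_smul 1 (hφ.mul (by fun_prop)) (.of_forall fun y ↦ ?_)
    rw [norm_mul, norm_eq_abs, norm_of_nonneg (exp_pos _).le]
    calc |φ y| * exp (M * |y|) ≤ exp (-(L * |y|)) * exp (M * |y|) := by gcongr; exact hφ_le y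
      _ = exp (-((L - M) * |y|)) := by rw [← exp_add]; ring_nf
      _ ≤ 1 := exp_le_one_iff.2 (neg_nonpos.2 (mul_nonneg (sub_nonneg.2 hML) (abs_nonneg y)))
  refine h_smul.congr (.of_forall fun y ↦ ?_)
  simp only [smul_smul, mul_assoc, ← exp_add, add_neg_cancel, exp_zero, mul_one]

lemma integrable_exp_neg_mul_abs_smul_const {L : ℝ} (hL : 0 < L) (v : E) :
    Integrable fun y : ℝ ↦ exp (-(L * |y|)) • v := by
  simpa using (integrable_abs_rpow_mul_exp_neg_mul_abs one_pos hL).smul_const v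

lemma integrable_exp_neg_mul_abs_smul_sub_const {f : ℝ → E} {L M : ℝ}
    (hf : Integrable fun y ↦ exp (-(M * |y|)) • f y) (hL : 0 < L) (hML : M ≤ L) (v : E) :
    Integrable fun y ↦ exp (-(L * |y|)) • (f y - v) := by
  simp only [smul_sub]
  exact (integrable_smul_of_abs_le_exp_neg_mul_abs hf (by fun_prop)
    (fun y ↦ (abs_of_pos (exp_pos _)).le) hML).sub (integrable_exp_neg_mul_abs_smul_const hL v)

lemma integral_eq_zero_of_odd {G : Type*} [MeasurableSpace G] [AddGroup G] [MeasurableNeg G]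
    {μ : Measure G} [μ.IsNegInvariant] {g : G → E} (hg : Function.Odd g) : ∫ y, g y ∂μ = 0 := by
  have : IsAddTorsionFree E := .of_isTorsionFree ℝ E
  rw [← self_eq_neg, ← integral_neg, ← integral_neg_eq_self g μ]
  simp only [hg _]

section Kernel

variable {K : ℝ → ℝ} {f : ℝ → E} {L M : ℝ}

lemma abs_comp_mul_le_exp_neg_mul_abs (hK_le : ∀ y, |K y| ≤ exp (-|y|)) (hL : 0 ≤ L) (y : ℝ) :
    |K (L * y)| ≤ exp (-(L * |y|)) := by
  simpa only [abs_mul, abs_of_nonneg hL] using hK_le (L * y)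

lemma integrable_comp_mul_smul (hK : Measurable K) (hK_le : ∀ y, |K y| ≤ exp (-|y|))
    (hf : Integrable fun y ↦ exp (-(M * |y|)) • f y) (hL : 0 ≤ L) (hML : M ≤ L) :
    Integrable fun y ↦ K (L * y) • f y :=
  integrable_smul_of_abs_le_exp_neg_mul_abs hf
    (hK.comp (measurable_const_mul L)).aestronglyMeasurable
    (abs_comp_mul_le_exp_neg_mul_abs hK_le hL) hML

lemma integral_odd_comp_mul_smul_sub_const (hK : Measurable K) (hK_odd : Function.Odd K)
    (hK_le : ∀ y, |K y| ≤ exp (-|y|)) (hf : Integrable fun y ↦ exp (-(M * |y|)) • f y)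
    (hL : 0 < L) (hML : M ≤ L) (v : E) :
    ∫ y, K (L * y) • (f y - v) = ∫ y, K (L * y) • f y := by
  have h_const : ∫ y, K (L * y) • v = 0 :=
    integral_eq_zero_of_odd fun y ↦ by rw [mul_neg, hK_odd, neg_smul]
  simp only [smul_sub]
  rw [integral_sub (integrable_comp_mul_smul hK hK_le hf hL.le hML)
    (integrable_comp_mul_smul hK hK_le (integrable_exp_neg_mul_abs_smul_const hL v) hL.le le_rfl),
    h_const, sub_zero]

lemma isBigO_integral_odd_comp_mul_smul (hK : Measurable K) (hK_odd : Function.Odd K)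
    (hK_le : ∀ y, |K y| ≤ exp (-|y|)) (hf : Integrable fun y ↦ exp (-(M * |y|)) • f y)
    (hf_zero : (fun y ↦ f y - f 0) =O[𝓝 0] fun y ↦ y) :
    (fun L ↦ ∫ y, K (L * y) • f y) =O[atTop] fun L : ℝ ↦ L ^ (-2 : ℝ) := by
  have h_linear : (fun y ↦ f y - f 0) =O[𝓝 0] fun y ↦ |y| ^ ((2 : ℝ) - 1) := by
    simpa only [show (2 : ℝ) - 1 = 1 by norm_num, rpow_one] using hf_zero.abs_right
  have h_watson := isBigO_integral_exp_neg_mul_abs_mul_norm two_pos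
    (integrable_exp_neg_mul_abs_smul_sub_const hf (lt_max_of_lt_right one_pos)
      (le_max_left M 1) (f 0)) h_linear
  refine IsBigO.trans (.of_bound' ?_) h_watson
  filter_upwards [eventually_gt_atTop 0, eventually_ge_atTop M] with L hL hML
  have h_majorant : Integrable fun y ↦ exp (-(L * |y|)) * ‖f y - f 0‖ := by
    simpa only [norm_smul, norm_of_nonneg (exp_pos _).le] using
      (integrable_exp_neg_mul_abs_smul_sub_const hf hL hML (f 0)).norm
  calc ‖∫ y, K (L * y) • f y‖ = ‖∫ y, K (L * y) • (f y - f 0)‖ := by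
        rw [integral_odd_comp_mul_smul_sub_const hK hK_odd hK_le hf hL hML]
    _ ≤ ∫ y, exp (-(L * |y|)) * ‖f y - f 0‖ := by
        refine norm_integral_le_of_norm_le h_majorant (.of_forall fun y ↦ ?_)
        rw [norm_smul, norm_eq_abs]
        gcongr
        exact abs_comp_mul_le_exp_neg_mul_abs hK_le hL.le y
    _ ≤ ‖∫ y, exp (-(L * |y|)) * ‖f y - f 0‖‖ := le_norm_self _

end Kernel

/-- The deviation of the Fermi factor `sigmoid (-y) = 1 / (e ^ y + 1)` from its zero-temperature
limit, the step function `1_{y < 0}`. The value at the jump is set to `0`, so that the function is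
exactly odd. -/
noncomputable def fermiStepDefect (y : ℝ) : ℝ := Real.sign y * sigmoid (-|y|)

lemma odd_fermiStepDefect : Function.Odd fermiStepDefect := fun y ↦ by
  rw [fermiStepDefect, fermiStepDefect, Real.sign_neg, abs_neg, neg_mul]

lemma sigmoid_neg_eq_indicator_add_fermiStepDefect {y : ℝ} (hy : y ≠ 0) :
    sigmoid (-y) = (Iio 0).indicator 1 y + fermiStepDefect y := by
  rcases hy.lt_or_gt with hy | hy
  · simp [fermiStepDefect, Real.sign_of_neg hy, abs_of_neg hy, hy, sigmoid_neg, sub_eq_add_neg]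
  · simp [fermiStepDefect, Real.sign_of_pos hy, abs_of_pos hy, hy.le]

lemma measurable_fermiStepDefect : Measurable fermiStepDefect := by
  have h_sign : Measurable Real.sign :=
    .ite measurableSet_Iio measurable_const (.ite measurableSet_Ioi measurable_const
      measurable_const)
  exact h_sign.mul (continuous_sigmoid.comp (by fun_prop)).measurable

lemma sigmoid_le_exp (y : ℝ) : sigmoid y ≤ exp y := by
  simpa using (sigmoid_mul_rexp_neg (-y)).symm.trans_le
    (mul_le_of_le_one_left (exp_pos _).le (sigmoid_le_one _))

lemma abs_fermiStepDefect_le (y : ℝ) : |fermiStepDefect y| ≤ exp (-|y|) := by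
  have h_sign : |Real.sign y| ≤ 1 := by
    rcases Real.sign_apply_eq y with h | h | h <;> simp [h]
  rw [fermiStepDefect, abs_mul, abs_of_pos (sigmoid_pos _)]
  exact (mul_le_of_le_one_left (sigmoid_nonneg _) h_sign).trans (sigmoid_le_exp _)

lemma sigmoid_smul_eq_indicator_add_fermiStepDefect_smul (f : ℝ → E) {L c x : ℝ} (hL : 0 < L)
    (hx : x ≠ c) :
    sigmoid (L * (c - x)) • f x = (Iio c).indicator f x + fermiStepDefect (L * (x - c)) • f x := by
  have h_step : (Iio (0 : ℝ)).indicator (1 : ℝ → ℝ) (L * (x - c)) • f x =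
      (Iio c).indicator f x := by
    by_cases hxc : x < c <;> simp [indicator, mul_neg_iff, hL, hL.not_gt, hxc]
  rw [← h_step, ← add_smul, ← sigmoid_neg_eq_indicator_add_fermiStepDefect
    (mul_ne_zero hL.ne' (sub_ne_zero.2 hx)), ← mul_neg, neg_sub]

/-- The first-order Sommerfeld expansion, with inverse temperature `L` and chemical potential
`c`. -/
lemma isBigO_integral_sigmoid_smul_sub_integral_Iio {f : ℝ → E} {c M : ℝ}
    (hf_Iio : IntegrableOn f (Iio c))
    (hf_int : Integrable fun x ↦ exp (-(M * |x - c|)) • f x)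
    (hf_c : (fun x ↦ f x - f c) =O[𝓝 c] fun x ↦ x - c) :
    (fun L ↦ (∫ x, sigmoid (L * (c - x)) • f x) - ∫ x in Iio c, f x) =O[atTop]
      fun L : ℝ ↦ L ^ (-2 : ℝ) := by
  have hf_int_shift : Integrable fun y ↦ exp (-(M * |y|)) • f (y + c) := by
    simpa only [add_sub_cancel_right] using hf_int.comp_add_right c
  have hf_c_shift : (fun y ↦ f (y + c) - f (0 + c)) =O[𝓝 0] fun y ↦ y := by
    have h_tendsto : Tendsto (· + c) (𝓝 0) (𝓝 c) := by
      simpa only [zero_add] using (continuous_add_const c).tendsto 0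
    simpa only [Function.comp_def, add_sub_cancel_right, zero_add] using
      hf_c.comp_tendsto h_tendsto
  refine (isBigO_integral_odd_comp_mul_smul measurable_fermiStepDefect odd_fermiStepDefect
    abs_fermiStepDefect_le hf_int_shift hf_c_shift).congr' ?_ .rfl
  filter_upwards [eventually_gt_atTop 0, eventually_ge_atTop M] with L hL hML
  have h_defect_int : Integrable fun x ↦ fermiStepDefect (L * (x - c)) • f x := by
    simpa only [sub_add_cancel] using (integrable_comp_mul_smul measurable_fermiStepDefect
      abs_fermiStepDefect_le hf_int_shift hL.le hML).comp_sub_right c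
  have h_split : ∀ᵐ x, sigmoid (L * (c - x)) • f x =
      (Iio c).indicator f x + fermiStepDefect (L * (x - c)) • f x := by
    filter_upwards [Measure.ae_ne volume c] with x hx
      using sigmoid_smul_eq_indicator_add_fermiStepDefect_smul f hL hx
  rw [integral_congr_ae h_split,
    integral_add (hf_Iio.integrable_indicator measurableSet_Iio) h_defect_int,
    integral_indicator measurableSet_Iio, add_sub_cancel_left,
    ← integral_sub_right_eq_self _ c]
  simp only [sub_add_cancel]

lemma integrableOn_exp_neg_abs_sub_mul_rpow {γ : ℝ} (hγ : 0 < γ) (c : ℝ) :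
    IntegrableOn (fun x ↦ exp (-|x - c|) * x ^ (γ - 1)) (Ioi 0) := by
  refine ((GammaIntegral_convergent hγ).const_mul (exp c)).mono' (by fun_prop) ?_
  filter_upwards [ae_restrict_mem measurableSet_Ioi] with x hx
  have hx_pow : 0 < x ^ (γ - 1) := rpow_pos_of_pos hx _
  rw [norm_of_nonneg (by positivity), ← mul_assoc, ← exp_add]
  gcongr
  linarith [le_abs_self (x - c)]

lemma isBigO_integral_rpow_mul_sigmoid {γ : ℝ} (hγ : 0 < γ) :
    (fun L ↦ (∫ x in Ioi 0, x ^ (γ - 1) * sigmoid (L * (1 - x))) - 1 / γ) =O[atTop]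
      fun L : ℝ ↦ L ^ (-2 : ℝ) := by
  set f : ℝ → ℝ := (Ioi 0).indicator fun x ↦ x ^ (γ - 1)
  have hf_pow : f =ᶠ[𝓝 1] fun x ↦ x ^ (γ - 1) := by
    filter_upwards [Ioi_mem_nhds one_pos] with x hx using indicator_of_mem hx _
  have hf_diff : DifferentiableAt ℝ f 1 :=
    (differentiableAt_id.rpow_const (.inl one_ne_zero)).congr_of_eventuallyEq hf_pow
  have hf_Ioo : IntegrableOn (fun x : ℝ ↦ x ^ (γ - 1)) (Ioo 0 1) := by
    rw [← integrableOn_Ioc_iff_integrableOn_Ioo,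
      ← intervalIntegrable_iff_integrableOn_Ioc_of_le zero_le_one]
    exact intervalIntegral.intervalIntegrable_rpow' (by linarith)
  have hf_Iio : IntegrableOn f (Iio 1) := by
    rw [integrableOn_indicator_iff measurableSet_Ioi, Ioi_inter_Iio]
    exact hf_Ioo
  have hf_int : Integrable fun x ↦ exp (-(1 * |x - 1|)) • f x := by
    simp only [f, one_mul, ← indicator_smul]
    exact (integrable_indicator_iff measurableSet_Ioi).2
      (integrableOn_exp_neg_abs_sub_mul_rpow hγ 1)
  have h_main : ∫ x in Iio 1, f x = 1 / γ := by
    rw [setIntegral_indicator measurableSet_Ioi, inter_comm, Ioi_inter_Iio,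
      ← integral_Ioc_eq_integral_Ioo, ← intervalIntegral.integral_of_le zero_le_one,
      integral_rpow (.inl (by linarith))]
    simp [hγ.ne']
  refine (isBigO_integral_sigmoid_smul_sub_integral_Iio hf_Iio hf_int
    hf_diff.isBigO_sub).congr_left fun L ↦ ?_
  rw [h_main, ← integral_indicator measurableSet_Ioi]
  congr 2 with x
  simp [f, indicator, mul_comm]

lemma inv_exp_div_add_one_eq_sigmoid {u : ℝ} (hu : 0 < u) (t : ℝ) :
    (exp t / u + 1)⁻¹ = sigmoid (log u - t) := by
  rw [sigmoid_def, neg_sub, exp_sub, exp_log hu, add_comm]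

lemma negLi_eq_integral_sigmoid (γ : ℝ) {u : ℝ} (hu : 1 < u) :
    negLi γ u = -(log u ^ γ / Gamma γ) *
      ∫ x in Ioi 0, x ^ (γ - 1) * sigmoid (log u * (1 - x)) := by
  have hL : 0 < log u := log_pos hu
  have h_subst : ∫ x in Ioi 0, (log u * x) ^ (γ - 1) / (exp (log u * x) / u + 1) =
      (log u)⁻¹ * ∫ t in Ioi 0, t ^ (γ - 1) / (exp t / u + 1) := by
    simpa only [mul_zero, smul_eq_mul] using
      integral_comp_mul_left_Ioi (fun t : ℝ ↦ t ^ (γ - 1) / (exp t / u + 1)) 0 hL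
  have h_integrand : ∫ x in Ioi 0, (log u * x) ^ (γ - 1) / (exp (log u * x) / u + 1) =
      log u ^ (γ - 1) * ∫ x in Ioi 0, x ^ (γ - 1) * sigmoid (log u * (1 - x)) := by
    rw [← integral_const_mul]
    refine setIntegral_congr_fun measurableSet_Ioi fun x hx ↦ ?_
    rw [div_eq_mul_inv, inv_exp_div_add_one_eq_sigmoid (one_pos.trans hu),
      mul_rpow hL.le (le_of_lt hx), mul_assoc, mul_one_sub]
  rw [negLi, (inv_mul_eq_iff_eq_mul₀ hL.ne').1 (h_subst.symm.trans h_integrand),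
    rpow_sub_one hL.ne']
  field_simp

lemma isBigO_negLi_add {γ : ℝ} (hγ : 0 < γ) :
    (fun u ↦ negLi γ u + log u ^ γ / Gamma (γ + 1)) =O[atTop] fun u ↦ log u ^ (γ - 2) := by
  have h := ((isBigO_integral_rpow_mul_sigmoid hγ).comp_tendsto tendsto_log_atTop).const_mul_left
    (-(Gamma γ)⁻¹)
  refine ((isBigO_refl (fun u ↦ log u ^ γ) atTop).mul h).congr' ?_ ?_
  all_goals filter_upwards [eventually_gt_atTop 1] with u hu
  · rw [negLi_eq_integral_sigmoid γ hu, Gamma_add_one hγ.ne', Function.comp_apply]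
    field_simp
    ring
  · rw [Function.comp_apply, ← rpow_add (log_pos hu), sub_eq_add_neg]

/-- Lemma (Hwang): `Li_γ(−u) = −(log u)^γ/Γ(γ+1)·(1 + O((log u)^{−2}))` as `u → +∞`. -/
theorem negLi_asymptotic (γ : ℝ) (hγ : 0 < γ) :
    ∃ C > (0:ℝ), ∃ u₀ > (1:ℝ), ∀ u : ℝ, u₀ ≤ u →
      |negLi γ u + (Real.log u) ^ γ / Real.Gamma (γ + 1)|
        ≤ C * (Real.log u) ^ (γ - 2) := by
  obtain ⟨C, hC, h_bound⟩ := (isBigO_negLi_add hγ).exists_pos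
  obtain ⟨u₀, hu₀, h_tail⟩ := (atTop_basis_Ioi' (1 : ℝ)).eventually_iff.1 h_bound.bound
  refine ⟨C, hC, u₀ + 1, by linarith, fun u hu ↦ ?_⟩
  have h_log : 0 ≤ log u := log_nonneg (by linarith)
  simpa only [norm_eq_abs, abs_of_nonneg (rpow_nonneg h_log _)] using
    h_tail (show u₀ < u by linarith)
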